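/- Let d ≥ 2 and m > 2d − 2. The measure μ = |z|^{-1} δ_{Σ*} on ℝ^{2d} is an atomless σ-finite Borel measure, and integration against μ defines a bounded linear functional on the space C_m(ℝ^{2d}) of continuous functions f with finite norm |f|_m = sup_z |f(z)|⟨z⟩^m; namely |∫ f dμ| ≤ C(d,m)|f|_m. -/

import Mathlib

open MeasureTheory Real Set

noncomputable section

abbrev Z (d : ℕ) := EuclideanSpace ℝ (Fin d ⊕ Fin d)

def om {d : ℕ} (z : Z d) : ℝ := ∑ i : Fin d, z (Sum.inl i) * z (Sum.inr i)

def SigmaStar (d : ℕ) : Set (Z d) := {z | om z = 0 ∧ z ≠ 0}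

/-- The measure `μ = |z|⁻¹ δ_{Σ*}`. -/
def muSigma (d : ℕ) : Measure (Z d) :=
  ((μH[(2 * d - 1 : ℝ)] : Measure (Z d)).restrict (SigmaStar d)).withDensity
    (fun z => ENNReal.ofReal ‖z‖⁻¹)

open Topology Pointwise

/-- The point with free coordinates `w` and with coordinate `a.swap` chosen so that `om` vanishes,
provided that the coordinate `a` is nonzero. -/
def graphMap {d : ℕ} (a : Fin d ⊕ Fin d) (w : {b : Fin d ⊕ Fin d // b ≠ a.swap} → ℝ) : Z d :=
  WithLp.toLp 2 fun b => if h : b = a.swap then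
    -(∑ i : Fin d, (if h : Sum.inl i = a.swap then 0 else w ⟨Sum.inl i, h⟩) *
      (if h : Sum.inr i = a.swap then 0 else w ⟨Sum.inr i, h⟩)) *
      (w ⟨a, by cases a <;> simp⟩)⁻¹
    else w ⟨b, h⟩

lemma graphMap_restrict {d : ℕ} (a : Fin d ⊕ Fin d) {z : Z d} (hz : om z = 0) (ha : z a ≠ 0) :
    graphMap a (fun b => z b) = z := by
  ext b
  simp only [graphMap]
  split_ifs with h
  · subst h
    have key : (∑ i : Fin d, (if Sum.inl i = a.swap then 0 else z (Sum.inl i)) *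
      (if Sum.inr i = a.swap then 0 else z (Sum.inr i))) = - (z a.swap * z a) := by
      have h0 : om z - z a.swap * z a = - (z a.swap * z a) := by rw [hz]; ring
      rw [← h0, om]
      rcases a with j | j
      · rw [← Finset.sum_erase_add _ _ (Finset.mem_univ j),
          ← Finset.sum_erase_add (a := j) _ (fun i => z (Sum.inl i) * z (Sum.inr i))
            (Finset.mem_univ j)]
        simp only [Sum.swap_inl, reduceCtorEq, if_false, if_true, mul_zero, add_zero]
        rw [mul_comm (z (Sum.inr j)), add_sub_cancel_right]
        refine Finset.sum_congr rfl fun i hi => ?_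
        simp [Finset.ne_of_mem_erase hi]
      · rw [← Finset.sum_erase_add _ _ (Finset.mem_univ j),
          ← Finset.sum_erase_add (a := j) _ (fun i => z (Sum.inl i) * z (Sum.inr i))
            (Finset.mem_univ j)]
        simp only [Sum.swap_inr, reduceCtorEq, if_false, if_true, zero_mul, add_zero]
        rw [add_sub_cancel_right]
        refine Finset.sum_congr rfl fun i hi => ?_
        simp [Finset.ne_of_mem_erase hi]
    simp only [dite_eq_ite]
    rw [key]
    field_simp
  · rfl

lemma contDiffAt_graphMap {d : ℕ} (a : Fin d ⊕ Fin d)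
    (w : {b : Fin d ⊕ Fin d // b ≠ a.swap} → ℝ) (hw : w ⟨a, by cases a <;> simp⟩ ≠ 0) :
    ContDiffAt ℝ 1 (graphMap a) w := by
  have hcoord : ∀ b, ContDiffAt ℝ 1 (fun w : {b : Fin d ⊕ Fin d // b ≠ a.swap} → ℝ => w b) w :=
    fun b => (contDiff_apply ℝ ℝ b).contDiffAt
  rw [contDiffAt_euclidean]
  intro b
  simp only [graphMap]
  by_cases h : b = a.swap
  · simp only [h, dite_true]
    refine ContDiffAt.mul (ContDiffAt.neg (ContDiffAt.sum fun i _ => ContDiffAt.mul ?_ ?_))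
      ((hcoord _).inv hw)
    · split_ifs
      · exact contDiffAt_const
      · exact hcoord _
    · split_ifs
      · exact contDiffAt_const
      · exact hcoord _
  · simp only [h, dite_false]
    exact hcoord _

lemma continuous_om {d : ℕ} : Continuous (om : Z d → ℝ) := by
  unfold om
  fun_prop

/-- The zero set of `om` has locally finite `(2d-1)`-dimensional measure away from the origin. -/
lemma exists_nhds_hausdorffMeasure_lt_top {d : ℕ} {z : Z d} (hz : z ≠ 0) :
    ∃ s ∈ 𝓝 z, μH[(2 * d - 1 : ℝ)] (s ∩ {x : Z d | om x = 0}) < ⊤ := by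
  obtain ⟨a, ha⟩ : ∃ a, z a ≠ 0 := by
    by_contra! h
    exact hz (by ext a; simp [h a])
  let res : Z d → ({b : Fin d ⊕ Fin d // b ≠ a.swap} → ℝ) := fun z b => z b
  have hres : Continuous res := by unfold res; fun_prop
  obtain ⟨K, t, ht, hK⟩ := (contDiffAt_graphMap a (res z) ha).exists_lipschitzOnWith
  have hd : 1 ≤ d := by
    rcases a with j | j <;> exact j.pos
  have hcard : ((Fintype.card {b : Fin d ⊕ Fin d // b ≠ a.swap} : ℕ) : ℝ) = 2 * d - 1 := by
    rw [Fintype.card_subtype_compl, Fintype.card_subtype_eq, Fintype.card_sum, Fintype.card_fin,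
      Nat.cast_sub (by omega)]
    push_cast
    ring
  have hpos : (0 : ℝ) ≤ 2 * d - 1 := by rw [← hcard]; positivity
  let u := t ∩ Metric.ball (res z) 1
  have hu : u ∈ 𝓝 (res z) := Filter.inter_mem ht (Metric.ball_mem_nhds _ one_pos)
  have hne : ∀ᶠ x in 𝓝 z, x a ≠ 0 :=
    (show Continuous fun x : Z d => x a by fun_prop).continuousAt.eventually_ne ha
  refine ⟨res ⁻¹' u ∩ {x | x a ≠ 0},
    Filter.inter_mem (hres.continuousAt.preimage_mem_nhds hu) hne, ?_⟩
  have hsub : res ⁻¹' u ∩ {x | x a ≠ 0} ∩ {x : Z d | om x = 0} ⊆ graphMap a '' u := by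
    rintro x ⟨⟨hxu, hxa⟩, hx0⟩
    exact ⟨res x, hxu, graphMap_restrict a hx0 hxa⟩
  refine (measure_mono hsub).trans_lt
    (((hK.mono inter_subset_left).hausdorffMeasure_image_le hpos).trans_lt ?_)
  rw [← hcard, hausdorffMeasure_pi_real]
  refine ENNReal.mul_lt_top (ENNReal.rpow_lt_top_of_nonneg (by positivity) ENNReal.coe_ne_top) ?_
  exact (measure_mono inter_subset_right).trans_lt measure_ball_lt_top

/-- The part of `SigmaStar d` in the dyadic annulus `2 ^ k ≤ ‖z‖ < 2 ^ (k + 1)`. -/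
def dyadicShell (d : ℕ) (k : ℤ) : Set (Z d) :=
  {z | om z = 0 ∧ ‖z‖ ∈ Ico ((2 : ℝ) ^ k) (2 ^ (k + 1))}

lemma hausdorffMeasure_dyadicShell_zero_lt_top (d : ℕ) :
    μH[(2 * d - 1 : ℝ)] (dyadicShell d 0) < ⊤ := by
  let S : Set (Z d) := {x | om x = 0}
  have hS : IsClosed S := isClosed_eq continuous_om continuous_const
  let K : Set (Z d) := Metric.closedBall 0 2 ∩ {x | 1 ≤ ‖x‖}
  have hK : IsCompact K :=
    (isCompact_closedBall _ _).inter_right (isClosed_le continuous_const continuous_norm)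
  have h : (μH[(2 * d - 1 : ℝ)] : Measure (Z d)).restrict S K < ⊤ := by
    refine hK.measure_lt_top_of_nhdsWithin fun x hx => ?_
    have hx0 : x ≠ 0 := by
      rintro rfl
      have := hx.2
      norm_num at this
    obtain ⟨s, hs, hlt⟩ := exists_nhds_hausdorffMeasure_lt_top hx0
    exact ⟨s, mem_nhdsWithin_of_mem_nhds hs, by rwa [Measure.restrict_apply' hS.measurableSet]⟩
  rw [Measure.restrict_apply' hS.measurableSet] at h
  refine (measure_mono ?_).trans_lt h
  rintro x ⟨hx0, h1, h2⟩
  norm_num at h1 h2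
  exact ⟨⟨by simpa using h2.le, h1⟩, hx0⟩

lemma om_smul {d : ℕ} (r : ℝ) (z : Z d) : om (r • z) = r ^ 2 * om z := by
  simp only [om, PiLp.smul_apply, smul_eq_mul, Finset.mul_sum]
  exact Finset.sum_congr rfl fun i _ => by ring

lemma dyadicShell_subset_smul (d : ℕ) (k : ℤ) :
    dyadicShell d k ⊆ ((2 : ℝ) ^ k) • dyadicShell d 0 := by
  rintro x ⟨hx0, h1, h2⟩
  have hp : (0 : ℝ) < 2 ^ k := by positivity
  rw [Set.mem_smul_set_iff_inv_smul_mem₀ hp.ne']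
  refine ⟨by rw [om_smul, hx0, mul_zero], ?_⟩
  rw [norm_smul, norm_inv, norm_of_nonneg hp.le, inv_mul_eq_div]
  refine ⟨?_, ?_⟩
  · rwa [zpow_zero, one_le_div hp]
  · rw [div_lt_iff₀ hp]
    rw [zpow_add₀ two_ne_zero] at h2
    simpa [mul_comm] using h2

lemma hausdorffMeasure_dyadicShell_le {d : ℕ} (hd : 1 ≤ d) (k : ℤ) :
    μH[(2 * d - 1 : ℝ)] (dyadicShell d k) ≤
      ENNReal.ofReal (((2 : ℝ) ^ k) ^ (2 * d - 1 : ℝ)) *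
        μH[(2 * d - 1 : ℝ)] (dyadicShell d 0) := by
  have hd' : (1 : ℝ) ≤ d := by exact_mod_cast hd
  have hp : (0 : ℝ) < 2 ^ k := by positivity
  refine (measure_mono (dyadicShell_subset_smul d k)).trans ?_
  rw [Measure.hausdorffMeasure_smul₀ (by linarith) hp.ne', ENNReal.smul_def, smul_eq_mul]
  gcongr
  rw [ENNReal.ofReal, ENNReal.coe_le_coe, ← NNReal.coe_le_coe, Real.coe_toNNReal _ (by positivity)]
  simp

lemma SigmaStar_subset_iUnion_dyadicShell (d : ℕ) : SigmaStar d ⊆ ⋃ k, dyadicShell d k := by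
  rintro x ⟨hx0, hx⟩
  obtain ⟨k, hk⟩ := exists_mem_Ico_zpow (norm_pos_iff.2 hx) one_lt_two
  exact mem_iUnion.2 ⟨k, hx0, hk⟩

lemma summable_zpow_mul_min_one {s m : ℝ} (hs : 0 < s) (hm : s < m) :
    Summable fun k : ℤ => ((2 : ℝ) ^ k) ^ s * min 1 (((2 : ℝ) ^ k) ^ (-m)) := by
  refine Summable.of_nat_of_neg ?_ ?_
  · refine Summable.of_nonneg_of_le (fun n => by positivity) (fun n => ?_)
      (summable_geometric_of_lt_one (r := (2 : ℝ) ^ (s - m)) (by positivity)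
        (Real.rpow_lt_one_of_one_lt_of_neg one_lt_two (by linarith)))
    refine (mul_le_mul_of_nonneg_left (min_le_right _ _) (by positivity)).trans_eq ?_
    rw [← Real.rpow_add (by positivity), zpow_natCast, ← Real.rpow_natCast, ← Real.rpow_natCast,
      ← Real.rpow_mul two_pos.le, ← Real.rpow_mul two_pos.le]
    ring_nf
  · refine Summable.of_nonneg_of_le (fun n => by positivity) (fun n => ?_)
      (summable_geometric_of_lt_one (r := (2 : ℝ) ^ (-s)) (by positivity)
        (Real.rpow_lt_one_of_one_lt_of_neg one_lt_two (by linarith)))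
    refine (mul_le_mul_of_nonneg_left (min_le_left _ _) (by positivity)).trans_eq ?_
    rw [mul_one, ← Real.rpow_intCast, ← Real.rpow_natCast, ← Real.rpow_mul two_pos.le,
      ← Real.rpow_mul two_pos.le]
    push_cast
    ring_nf

lemma lintegral_muSigma_lt_top {d : ℕ} (hd : 2 ≤ d) {m : ℝ} (hm : 2 * d - 2 < m) :
    ∫⁻ z, ENNReal.ofReal (Real.sqrt (‖z‖ ^ 2 + 1) ^ (-m)) ∂(muSigma d) < ⊤ := by
  have hd' : (2 : ℝ) ≤ d := by exact_mod_cast hd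
  have hmeas : Measurable fun z : Z d => ENNReal.ofReal (Real.sqrt (‖z‖ ^ 2 + 1) ^ (-m)) := by
    fun_prop
  rw [muSigma, lintegral_withDensity_eq_lintegral_mul _ (by fun_prop) hmeas]
  refine (lintegral_mono_set (SigmaStar_subset_iUnion_dyadicShell d)).trans_lt
    ((lintegral_iUnion_le _ _).trans_lt ?_)
  set c := μH[(2 * d - 1 : ℝ)] (dyadicShell d 0) with hc
  have hbound : ∀ k : ℤ, ∫⁻ z in dyadicShell d k, ((fun z : Z d => ENNReal.ofReal ‖z‖⁻¹) *
      (fun z : Z d => ENNReal.ofReal (Real.sqrt (‖z‖ ^ 2 + 1) ^ (-m))) : Z d → ENNReal) z ∂μH[(2 * d - 1 : ℝ)] ≤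
      ENNReal.ofReal (((2 : ℝ) ^ k) ^ (2 * d - 2 : ℝ) * min 1 (((2 : ℝ) ^ k) ^ (-m))) * c := by
    intro k
    have hp : (0 : ℝ) < 2 ^ k := by positivity
    calc _ ≤ ∫⁻ z in dyadicShell d k, ENNReal.ofReal (((2 : ℝ) ^ k)⁻¹ *
          min 1 (((2 : ℝ) ^ k) ^ (-m))) ∂μH[(2 * d - 1 : ℝ)] := by
          refine setLIntegral_mono measurable_const fun z hz => ?_
          rw [Pi.mul_apply, ← ENNReal.ofReal_mul (by positivity)]
          refine ENNReal.ofReal_le_ofReal (mul_le_mul (inv_anti₀ hp hz.2.1) (le_min ?_ ?_)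
            (by positivity) (by positivity))
          · refine Real.rpow_le_one_of_one_le_of_nonpos ?_ (by linarith)
            rw [Real.one_le_sqrt]
            nlinarith [sq_nonneg ‖z‖]
          · refine Real.rpow_le_rpow_of_nonpos hp ?_ (by linarith)
            refine hz.2.1.trans (Real.le_sqrt_of_sq_le (by linarith))
      _ ≤ ENNReal.ofReal (((2 : ℝ) ^ k)⁻¹ * min 1 (((2 : ℝ) ^ k) ^ (-m))) *
          (ENNReal.ofReal (((2 : ℝ) ^ k) ^ (2 * d - 1 : ℝ)) * c) := by
          rw [setLIntegral_const]
          gcongr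
          exact hausdorffMeasure_dyadicShell_le (by omega) k
      _ = _ := by
          rw [← mul_assoc, ← ENNReal.ofReal_mul (by positivity)]
          congr 2
          rw [show (2 * d - 1 : ℝ) = (2 * d - 2) + 1 by ring, Real.rpow_add_one hp.ne']
          field_simp
  refine (ENNReal.tsum_le_tsum hbound).trans_lt ?_
  rw [ENNReal.tsum_mul_right]
  exact ENNReal.mul_lt_top
    (summable_zpow_mul_min_one (by linarith) hm).tsum_ofReal_lt_top
    (hausdorffMeasure_dyadicShell_zero_lt_top d)

/-- A measure that integrates a positive finite measurable function is σ-finite. -/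
lemma sigmaFinite_of_lintegral_pos_ne_top {α : Type*} [MeasurableSpace α] {μ : Measure α}
    {g : α → ENNReal} (hg : Measurable g) (hpos : ∀ x, g x ≠ 0) (hfin : ∀ x, g x ≠ ⊤)
    (hint : ∫⁻ x, g x ∂μ ≠ ⊤) : SigmaFinite μ := by
  have : IsFiniteMeasure (μ.withDensity g) := isFiniteMeasure_withDensity hint
  rw [← withDensity_inv_same (μ := μ) hg (Filter.Eventually.of_forall hpos)
    (Filter.Eventually.of_forall hfin)]
  exact SigmaFinite.withDensity_of_ne_top
    (Filter.Eventually.of_forall fun x => ENNReal.inv_ne_top.2 (hpos x))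

/-- for `d ≥ 2` and `m > 2d − 2`, the measure `μ = |z|⁻¹ δ_{Σ*}` is an atomless
σ-finite Borel measure, and `f ↦ ∫ f dμ` is a bounded linear functional on `C_m(ℝ^{2d})`:
every continuous `f` with `|f(z)|⟨z⟩^m ≤ A` is `μ`-integrable with `|∫ f dμ| ≤ C A`. -/
theorem muSigma_functional (d : ℕ) (hd : 2 ≤ d) (m : ℝ) (hm : 2 * d - 2 < m) :
    (∀ z : Z d, muSigma d {z} = 0) ∧ SigmaFinite (muSigma d) ∧
    ∃ C > (0:ℝ), ∀ f : Z d → ℝ, ∀ A : ℝ, Continuous f →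
      (∀ z, |f z| * (Real.sqrt (‖z‖ ^ 2 + 1)) ^ m ≤ A) →
      Integrable f (muSigma d) ∧ |∫ z, f z ∂(muSigma d)| ≤ C * A := by
  have hd' : (2 : ℝ) ≤ d := by exact_mod_cast hd
  have hlt := lintegral_muSigma_lt_top hd hm
  let g : Z d → ℝ := fun z => Real.sqrt (‖z‖ ^ 2 + 1) ^ (-m)
  have hgpos : ∀ z, 0 < g z := fun z => by positivity
  have hgmeas : Measurable g := by fun_prop
  have hg : Integrable g (muSigma d) :=
    ⟨hgmeas.aestronglyMeasurable, by
      rw [hasFiniteIntegral_iff_ofReal (Filter.Eventually.of_forall fun z => (hgpos z).le)]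
      exact hlt⟩
  have hg0 : 0 ≤ ∫ z, g z ∂(muSigma d) := integral_nonneg fun z => (hgpos z).le
  refine ⟨fun z => ?_, ?_, (∫ z, g z ∂(muSigma d)) + 1, by positivity, fun f A hf hA => ?_⟩
  · have := Measure.nullSingletonClass_hausdorff (Z d) (d := (2 * d - 1 : ℝ)) (by linarith)
    exact (withDensity_absolutelyContinuous _ _) (Measure.absolutelyContinuous_of_le
      Measure.restrict_le_self (measure_singleton z))
  · exact sigmaFinite_of_lintegral_pos_ne_top (g := fun z => ENNReal.ofReal (g z)) (by fun_prop)
      (fun z => (ENNReal.ofReal_pos.2 (hgpos z)).ne') (fun z => ENNReal.ofReal_ne_top) hlt.ne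
  · have hA0 : 0 ≤ A := le_trans (by positivity) (hA 0)
    have hle : ∀ z, ‖f z‖ ≤ A * g z := fun z => by
      have hp : 0 < Real.sqrt (‖z‖ ^ 2 + 1) := by positivity
      simp only [g, Real.rpow_neg hp.le]
      rw [← div_eq_mul_inv, le_div_iff₀ (by positivity)]
      exact hA z
    have hAg := hg.const_mul A
    refine ⟨hAg.mono' hf.aestronglyMeasurable (Filter.Eventually.of_forall hle), ?_⟩
    calc |∫ z, f z ∂(muSigma d)| ≤ ∫ z, A * g z ∂(muSigma d) :=
          norm_integral_le_of_norm_le hAg (Filter.Eventually.of_forall hle)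
      _ = (∫ z, g z ∂(muSigma d)) * A := by rw [integral_const_mul, mul_comm]
      _ ≤ _ := by nlinarith
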